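/- arXiv:2411.15038 — 5 statements merged into one kernel-verified Lean document; each statement's English description precedes it below -/
import Mathlib

section
/- Consider the smooth vector fields on ℝ² \ {0} given in Cartesian components by e₁(x,y) = ((x²/2 + y²)/r², −xy/(2r²)) and e₂(x,y) = (−xy/(2r²), (y²/2 + x²)/r²), where r² = x² + y². Then their Lie bracket satisfies [e₁, e₂](x,y) := De₂(x,y)·e₁(x,y) − De₁(x,y)·e₂(x,y) = (1/(2r²))·(−y, x), i.e. [e₁, e₂] = (1/(2r²))·∂φ. -/
open Real

/-- Cartesian expression of the first reference frame field `e₁`. -/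
noncomputable def frameE₁ : ℝ × ℝ → ℝ × ℝ :=
  fun p => (((p.1 ^ 2 / 2 + p.2 ^ 2) / (p.1 ^ 2 + p.2 ^ 2)),
            -(p.1 * p.2) / (2 * (p.1 ^ 2 + p.2 ^ 2)))

/-- Cartesian expression of the second reference frame field `e₂`. -/
noncomputable def frameE₂ : ℝ × ℝ → ℝ × ℝ :=
  fun p => (-(p.1 * p.2) / (2 * (p.1 ^ 2 + p.2 ^ 2)),
            ((p.2 ^ 2 / 2 + p.1 ^ 2) / (p.1 ^ 2 + p.2 ^ 2)))

/-!
On `x² + y² ≠ 0` the field `e₁` is the constant field `∂x` with its radial component halved, and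
`e₂` is `∂y` with its radial component halved: `e₁ = ∂x - f E` and `e₂ = ∂y - g E`, where
`E(q) = q` is the Euler field, `f = x / (2r²)` and `g = y / (2r²)`. In `[u - f E, v - g E]` the
coefficient of `E` is `∂ᵥf - ∂ᵤg + f E(g) - g E(f)`. It vanishes because `f` and `g` are partial
derivatives of the same function `(log r) / 2` and are both homogeneous of degree `-1`. What
remains is `f v - g u`, since `[u, E] = u`.
-/

open VectorField

section NormedSpace

variable {𝕜 E : Type*} [NontriviallyNormedField 𝕜] [NormedAddCommGroup E] [NormedSpace 𝕜 E]

lemma hasFDerivAt_fun_div {f g : E → 𝕜} {f' g' : E →L[𝕜] 𝕜} {p : E}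
    (hf : HasFDerivAt f f' p) (hg : HasFDerivAt g g' p) (hp : g p ≠ 0) :
    HasFDerivAt (fun q ↦ f q / g q) ((g p)⁻¹ • (f' - (f p / g p) • g')) p := by
  have hinv : HasFDerivAt (fun q ↦ (g q)⁻¹) (-(g p ^ 2)⁻¹ • g') p :=
    (hasDerivAt_inv hp).comp_hasFDerivAt p hg
  simp only [div_eq_mul_inv]
  refine (hf.fun_mul hinv).congr_fderiv ?_
  ext w
  simp only [add_apply, sub_apply, smul_apply, smul_eq_mul]
  field

lemma lieBracket_const_sub_smul_id {f g : E → 𝕜} {p : E} (u v : E)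
    (hf : DifferentiableAt 𝕜 f p) (hg : DifferentiableAt 𝕜 g p) :
    lieBracket 𝕜 (fun q ↦ u - f q • q) (fun q ↦ v - g q • q) p =
      f p • v - g p • u +
        (fderiv 𝕜 f p v - fderiv 𝕜 g p u + f p * fderiv 𝕜 g p p - g p * fderiv 𝕜 f p p) • p := by
  have fderiv_field {h : E → 𝕜} (hh : DifferentiableAt 𝕜 h p) (w z : E) :
      fderiv 𝕜 (fun q ↦ w - h q • q) p z = -(h p • z + fderiv 𝕜 h p z • p) := by
    rw [fderiv_const_sub, fderiv_fun_smul hh differentiableAt_fun_id, fderiv_fun_id]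
    rfl
  simp only [lieBracket, fderiv_field hf, fderiv_field hg, map_sub, map_smul, smul_eq_mul]
  module

/-- The coefficient along `q` of the `B`-orthogonal projection of `u` onto the line spanned by `q`,
for a bilinear form `B`. It has the junk value `0` where `B q q = 0`. -/
def radialCoeff (B : E →L[𝕜] E →L[𝕜] 𝕜) (u q : E) : 𝕜 :=
  B u q / B q q

/-- The constant vector field `u` with its radial component, in the sense of the bilinear form `B`,
multiplied by `1 - c`. In the Euclidean plane, `c = 1 / 2` and the two basis vectors `u` give the
reference frame away from the origin. -/
def radialShrink (B : E →L[𝕜] E →L[𝕜] 𝕜) (c : 𝕜) (u : E) : E → E :=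
  fun q ↦ u - (c * radialCoeff B u q) • q

variable {B : E →L[𝕜] E →L[𝕜] 𝕜} {p : E}

lemma hasFDerivAt_radialCoeff (hB : ∀ x y, B x y = B y x) (u : E) (hp : B p p ≠ 0) :
    HasFDerivAt (radialCoeff B u) ((B p p)⁻¹ • (B u - (2 * radialCoeff B u p) • B p)) p := by
  have hquad : HasFDerivAt (fun q ↦ B q q) (2 • B p) p := by
    refine (B.hasFDerivAt_of_bilinear (hasFDerivAt_id p) (hasFDerivAt_id p)).congr_fderiv ?_
    ext w
    simp [hB w p, two_mul]
  refine (hasFDerivAt_fun_div (B u).hasFDerivAt hquad hp).congr_fderiv ?_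
  simp only [radialCoeff]
  module

lemma fderiv_radialCoeff_apply (hB : ∀ x y, B x y = B y x) (u v : E) (hp : B p p ≠ 0) :
    fderiv 𝕜 (radialCoeff B u) p v = (B u v - 2 * radialCoeff B u p * B v p) / B p p := by
  rw [(hasFDerivAt_radialCoeff hB u hp).fderiv, hB v p, div_eq_inv_mul]
  rfl

lemma fderiv_radialCoeff_comm (hB : ∀ x y, B x y = B y x) (u v : E) (hp : B p p ≠ 0) :
    fderiv 𝕜 (radialCoeff B u) p v = fderiv 𝕜 (radialCoeff B v) p u := by
  rw [fderiv_radialCoeff_apply hB u v hp, fderiv_radialCoeff_apply hB v u hp, hB v u]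
  simp only [radialCoeff]
  ring

lemma fderiv_radialCoeff_self (hB : ∀ x y, B x y = B y x) (u : E) (hp : B p p ≠ 0) :
    fderiv 𝕜 (radialCoeff B u) p p = -radialCoeff B u p := by
  rw [fderiv_radialCoeff_apply hB u p hp, radialCoeff]
  field

theorem lie_bracket_reference_frame_general (hB : ∀ x y, B x y = B y x) (c : 𝕜) (u v : E)
    (hp : B p p ≠ 0) :
    lieBracket 𝕜 (radialShrink B c u) (radialShrink B c v) p =
      (c / B p p) • (B u p • v - B v p • u) := by
  have hdiff (w : E) : DifferentiableAt 𝕜 (radialCoeff B w) p :=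
    (hasFDerivAt_radialCoeff hB w hp).differentiableAt
  have hfderiv (w z : E) :
      fderiv 𝕜 (fun q ↦ c * radialCoeff B w q) p z = c * fderiv 𝕜 (radialCoeff B w) p z := by
    rw [fderiv_const_mul (hdiff w), smul_apply, smul_eq_mul]
  unfold radialShrink
  rw [lieBracket_const_sub_smul_id u v ((hdiff u).const_mul c) ((hdiff v).const_mul c)]
  simp only [hfderiv, fderiv_radialCoeff_comm hB u v hp, fderiv_radialCoeff_self hB _ hp]
  simp only [radialCoeff]
  module

end NormedSpace

/-- The Euclidean inner product on `ℝ × ℝ`, as a bilinear form because the norm of `ℝ × ℝ` is the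
sup norm and carries no inner product structure. -/
noncomputable def planeDot : ℝ × ℝ →L[ℝ] ℝ × ℝ →L[ℝ] ℝ :=
  let mul := ContinuousLinearMap.mul ℝ ℝ
  let fst := ContinuousLinearMap.fst ℝ ℝ ℝ
  let snd := ContinuousLinearMap.snd ℝ ℝ ℝ
  mul.bilinearComp fst fst + mul.bilinearComp snd snd

lemma planeDot_apply (p q : ℝ × ℝ) : planeDot p q = p.1 * q.1 + p.2 * q.2 := by
  simp [planeDot]

lemma planeDot_comm (p q : ℝ × ℝ) : planeDot p q = planeDot q p := by
  simp only [planeDot_apply, mul_comm]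

lemma planeDot_self (p : ℝ × ℝ) : planeDot p p = p.1 ^ 2 + p.2 ^ 2 := by
  rw [planeDot_apply, sq, sq]

lemma planeDot_self_ne_zero {p : ℝ × ℝ} (hp : p ≠ 0) : planeDot p p ≠ 0 := by
  contrapose! hp
  rw [planeDot_apply, mul_self_add_mul_self_eq_zero] at hp
  exact Prod.ext hp.1 hp.2

lemma frameE₁_eq_radialShrink {p : ℝ × ℝ} (hp : p ≠ 0) :
    frameE₁ p = radialShrink planeDot (1 / 2) (1, 0) p := by
  have hr : p.1 ^ 2 + p.2 ^ 2 ≠ 0 := planeDot_self p ▸ planeDot_self_ne_zero hp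
  simp only [frameE₁, radialShrink, radialCoeff, planeDot_self, planeDot_apply]
  ext
  · simp only [Prod.fst_sub, Prod.smul_fst, smul_eq_mul]
    field
  · simp only [Prod.snd_sub, Prod.smul_snd, smul_eq_mul]
    field

lemma frameE₂_eq_radialShrink {p : ℝ × ℝ} (hp : p ≠ 0) :
    frameE₂ p = radialShrink planeDot (1 / 2) (0, 1) p := by
  have hr : p.1 ^ 2 + p.2 ^ 2 ≠ 0 := planeDot_self p ▸ planeDot_self_ne_zero hp
  simp only [frameE₂, radialShrink, radialCoeff, planeDot_self, planeDot_apply]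
  ext
  · simp only [Prod.fst_sub, Prod.smul_fst, smul_eq_mul]
    field
  · simp only [Prod.snd_sub, Prod.smul_snd, smul_eq_mul]
    field

lemma lieBracket_frameE₁_frameE₂ {p : ℝ × ℝ} (hp : p ≠ 0) :
    lieBracket ℝ frameE₁ frameE₂ p =
      lieBracket ℝ (radialShrink planeDot (1 / 2) (1, 0))
        (radialShrink planeDot (1 / 2) (0, 1)) p := by
  have hne := eventually_ne_nhds hp
  exact Filter.EventuallyEq.lieBracket_vectorField_eq
    (hne.mono fun _ ↦ frameE₁_eq_radialShrink) (hne.mono fun _ ↦ frameE₂_eq_radialShrink)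

/-- the Lie bracket of the reference frame fields is
`[e₁, e₂] = (1/(2r²))·∂φ` where `∂φ(x,y) = (−y, x)`. -/
theorem lie_bracket_reference_frame (p : ℝ × ℝ) (hp : p ≠ 0) :
    fderiv ℝ frameE₂ p (frameE₁ p) - fderiv ℝ frameE₁ p (frameE₂ p) =
      (1 / (2 * (p.1 ^ 2 + p.2 ^ 2))) • (-p.2, p.1) := by
  change lieBracket ℝ frameE₁ frameE₂ p = _
  rw [lieBracket_frameE₁_frameE₂ hp,
    lie_bracket_reference_frame_general planeDot_comm _ _ _ (planeDot_self_ne_zero hp),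
    planeDot_self, div_div]
  simp [planeDot_apply]
end

section
/- Let g be the cone metric on ℝ² \ {0} and ω the associated connection 1-form ω(p; X) = (1/(2r²))·Xᵀ·g(p)·(−p₂, p₁). For every R > 0, the circle γ_R(t) = R·(cos t, sin t), t ∈ [0, 2π], satisfies ∫₀^{2π} ω(γ_R(t); γ_R'(t)) dt = π. -/
open Real Matrix intervalIntegral

/-- The cone metric on `ℝ² \ {0}`. -/
noncomputable def coneMetric (x y : ℝ) : Matrix (Fin 2) (Fin 2) ℝ :=
  !![1 + 3 * x ^ 2 / (x ^ 2 + y ^ 2), 3 * x * y / (x ^ 2 + y ^ 2);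
     3 * x * y / (x ^ 2 + y ^ 2), 1 + 3 * y ^ 2 / (x ^ 2 + y ^ 2)]

/-- The connection 1-form of the cone metric:
`ω(p; X) = (1/(2r²))·Xᵀ·g(p)·(−p₂, p₁)`. -/
noncomputable def connForm (p : ℝ × ℝ) (X : ℝ × ℝ) : ℝ :=
  (1 / (2 * (p.1 ^ 2 + p.2 ^ 2))) *
    (![X.1, X.2] ⬝ᵥ coneMetric p.1 p.2 *ᵥ ![-p.2, p.1])

/-!
The metric `g = 1 + (3 / r²) p pᵀ` fixes every vector orthogonal to `p`, in particular the
rotated vector `(-p₂, p₁)`. Hence `ω = (p₁ dp₂ - p₂ dp₁) / (2r²) = dθ / 2`, and integrating `ω`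
along a curve that avoids the origin gives half the increment of the angle.
-/

theorem coneMetric_eq_one_add_vecMulVec (x y : ℝ) :
    coneMetric x y = 1 + (3 / (x ^ 2 + y ^ 2)) • vecMulVec ![x, y] ![x, y] := by
  ext i j
  fin_cases i <;> fin_cases j <;> simp [coneMetric] <;> ring

theorem coneMetric_mulVec_of_dotProduct_eq_zero {x y : ℝ} {v : Fin 2 → ℝ}
    (hv : ![x, y] ⬝ᵥ v = 0) : coneMetric x y *ᵥ v = v := by
  rw [coneMetric_eq_one_add_vecMulVec, add_mulVec, one_mulVec, smul_mulVec, vecMulVec_mulVec, hv,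
    MulOpposite.op_zero, zero_smul, smul_zero, add_zero]

theorem connForm_eq_div (p X : ℝ × ℝ) :
    connForm p X = (p.1 * X.2 - p.2 * X.1) / (2 * (p.1 ^ 2 + p.2 ^ 2)) := by
  have horth : ![p.1, p.2] ⬝ᵥ ![-p.2, p.1] = 0 := by
    rw [vec2_dotProduct']
    ring
  rw [connForm, coneMetric_mulVec_of_dotProduct_eq_zero horth, vec2_dotProduct']
  ring

theorem connForm_polar {r : ℝ} (hr : r ≠ 0) (r' θ θ' : ℝ) :
    connForm (r * cos θ, r * sin θ)
      (r' * cos θ + r * (-sin θ * θ'), r' * sin θ + r * (cos θ * θ')) = θ' / 2 := by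
  have hnorm : (r * cos θ) ^ 2 + (r * sin θ) ^ 2 = r ^ 2 := by
    linear_combination r ^ 2 * sin_sq_add_cos_sq θ
  have hcross : r * cos θ * (r' * sin θ + r * (cos θ * θ')) -
      r * sin θ * (r' * cos θ + r * (-sin θ * θ')) = r ^ 2 * θ' := by
    linear_combination r ^ 2 * θ' * sin_sq_add_cos_sq θ
  rw [connForm_eq_div, hnorm, hcross]
  field_simp

theorem connForm_deriv_polar {r θ : ℝ → ℝ} {θ' t : ℝ} (hr : DifferentiableAt ℝ r t)
    (hr₀ : r t ≠ 0) (hθ : HasDerivAt θ θ' t) :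
    connForm (r t * cos (θ t), r t * sin (θ t))
      (deriv (fun s => (r s * cos (θ s), r s * sin (θ s))) t) = θ' / 2 := by
  have hγ := (hr.hasDerivAt.mul hθ.cos).prodMk (hr.hasDerivAt.mul hθ.sin)
  exact (congrArg (connForm _) hγ.deriv).trans (connForm_polar hr₀ _ _ _)

theorem connection_form_integral_circle_general {a b : ℝ} {r θ θ' : ℝ → ℝ}
    (hr : ∀ t ∈ Set.uIcc a b, DifferentiableAt ℝ r t) (hr₀ : ∀ t ∈ Set.uIcc a b, r t ≠ 0)
    (hθ : ∀ t ∈ Set.uIcc a b, HasDerivAt θ (θ' t) t)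
    (hθ' : IntervalIntegrable θ' MeasureTheory.volume a b) :
    let γ : ℝ → ℝ × ℝ := fun t => (r t * cos (θ t), r t * sin (θ t))
    ∫ t in a..b, connForm (γ t) (deriv γ t) = (θ b - θ a) / 2 := by
  intro γ
  calc ∫ t in a..b, connForm (γ t) (deriv γ t)
      = ∫ t in a..b, θ' t / 2 :=
        integral_congr fun t ht => connForm_deriv_polar (hr t ht) (hr₀ t ht) (hθ t ht)
    _ = (θ b - θ a) / 2 := by
        rw [integral_div, integral_eq_sub_of_hasDerivAt hθ hθ']

/-- the integral of the connection form along any circle of radius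
`R > 0` around the origin equals `π`. -/
theorem connection_form_integral_circle (R : ℝ) (hR : 0 < R) :
    let γ : ℝ → ℝ × ℝ := fun t => (R * Real.cos t, R * Real.sin t)
    ∫ t in (0 : ℝ)..(2 * π), connForm (γ t) (deriv γ t) = π := by
  simpa using connection_form_integral_circle_general (a := 0) (b := 2 * π) (r := fun _ => R)
    (fun _ _ => differentiableAt_const R) (fun _ _ => hR.ne') (fun t _ => hasDerivAt_id t)
    intervalIntegrable_const
end

section
/- Let g be the cone metric on ℝ² \ {0} and ω the associated connection 1-form ω(p; X) = (1/(2r²))·Xᵀ·g(p)·(−p₂, p₁). Let γ : [0,1] → ℝ² \ {0} be a C¹ curve and φ : [0,1] → ℝ a C¹ angle lift, i.e. γ(t) = ‖γ(t)‖·(cos φ(t), sin φ(t)) for all t. Then the geometric phase satisfies θ(γ) = ∫₀¹ ω(γ(t); γ'(t)) dt = (φ(1) − φ(0))/2. Moreover, if γ is closed, i.e. γ(0) = γ(1), then there exists an integer k (the winding number of γ around 0) with φ(1) − φ(0) = 2πk, and hence θ(γ) = π·k. -/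
/-!
The vector `(-p₂, p₁)` is fixed by the cone metric `g(p)`, so the connection form is half the
angular form `dθ`. Differentiating the relation `x sin φ = y cos φ` along a curve with angle lift
`φ` shows that `dθ` pulls back to `φ' dt`, without differentiating the radius. For a closed curve,
`φ` takes at the two ends angles of the same nonzero vector, which differ by a multiple of `2π`.
-/

open Real Matrix intervalIntegral

open MeasureTheory Topology

/-- The form `dθ = (x dy - y dx) / (x² + y²)` on the punctured plane, evaluated at the point `p` on
the tangent vector `X`; half of it is the connection form of the cone metric. At the origin,
division by zero makes it `0`. -/
noncomputable def angularForm (p X : ℝ × ℝ) : ℝ :=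
  (p.1 * X.2 - p.2 * X.1) / (p.1 ^ 2 + p.2 ^ 2)

/-- `θ` is a polar angle of `p`: an angle lift of a curve `γ` is a function `φ` such that `φ t` is a
polar angle of `γ t`. The radius is fixed to be the Euclidean norm, written out because the norm
of `ℝ × ℝ` is the supremum norm. Every `θ` is a polar angle of the origin. -/
def IsPolarAngle (p : ℝ × ℝ) (θ : ℝ) : Prop :=
  p = √(p.1 ^ 2 + p.2 ^ 2) • (cos θ, sin θ)

-- `g = 1 + 3 p pᵀ / r²` differs from the identity only in the radial direction.
theorem coneMetric_mulVec_perp (x y : ℝ) : coneMetric x y *ᵥ ![-y, x] = ![-y, x] := by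
  ext i
  fin_cases i <;> simp [coneMetric, mulVec, dotProduct] <;> ring

theorem connForm_eq_angularForm_div_two (p X : ℝ × ℝ) : connForm p X = angularForm p X / 2 := by
  rw [connForm, angularForm, coneMetric_mulVec_perp, vec2_dotProduct']
  field_simp
  ring

theorem sq_fst_add_sq_snd_ne_zero {p : ℝ × ℝ} (hp : p ≠ 0) : p.1 ^ 2 + p.2 ^ 2 ≠ 0 := by
  contrapose! hp
  rw [sq, sq, mul_self_add_mul_self_eq_zero] at hp
  exact Prod.ext hp.1 hp.2

namespace IsPolarAngle

variable {p : ℝ × ℝ} {θ ψ : ℝ}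

theorem fst_mul_sin_eq_snd_mul_cos (h : IsPolarAngle p θ) : p.1 * sin θ = p.2 * cos θ := by
  have h₁ : p.1 = √(p.1 ^ 2 + p.2 ^ 2) * cos θ := congrArg Prod.fst h
  have h₂ : p.2 = √(p.1 ^ 2 + p.2 ^ 2) * sin θ := congrArg Prod.snd h
  linear_combination sin θ * h₁ - cos θ * h₂

theorem coe_angle_eq (hp : p ≠ 0) (hθ : IsPolarAngle p θ) (hψ : IsPolarAngle p ψ) :
    (θ : Real.Angle) = ψ := by
  have hr : √(p.1 ^ 2 + p.2 ^ 2) ≠ 0 := fun h ↦ hp (by rw [hθ, h, zero_smul])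
  have hdir : (cos θ, sin θ) = (cos ψ, sin ψ) := smul_right_injective _ hr (hθ.symm.trans hψ)
  exact Real.Angle.cos_sin_inj (congrArg Prod.fst hdir) (congrArg Prod.snd hdir)

end IsPolarAngle

section AngleLift

variable {γ γ' : ℝ → ℝ × ℝ} {φ φ' : ℝ → ℝ} {a b : ℝ} {s : Set ℝ}

theorem angularForm_eq_of_hasDerivAt {v : ℝ × ℝ} {w t : ℝ} (hγ0 : γ t ≠ 0)
    (hγ : HasDerivAt γ v t) (hφ : HasDerivAt φ w t)
    (hdir : ∀ᶠ u in 𝓝 t, (γ u).1 * sin (φ u) = (γ u).2 * cos (φ u)) :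
    angularForm (γ t) v = w := by
  have hx' : HasDerivAt (fun u ↦ (γ u).1) v.1 t := hγ.fst
  have hy' : HasDerivAt (fun u ↦ (γ u).2) v.2 t := hγ.snd
  have hdiff : v.1 * sin (φ t) + (γ t).1 * (cos (φ t) * w) =
      v.2 * cos (φ t) + (γ t).2 * (-sin (φ t) * w) :=
    (hx'.mul hφ.sin).unique ((hy'.mul hφ.cos).congr_of_eventuallyEq hdir)
  let r := (γ t).1 * cos (φ t) + (γ t).2 * sin (φ t)
  have hx : (γ t).1 = r * cos (φ t) := by
    linear_combination sin (φ t) * hdir.self_of_nhds - (γ t).1 * sin_sq_add_cos_sq (φ t)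
  have hy : (γ t).2 = r * sin (φ t) := by
    linear_combination -cos (φ t) * hdir.self_of_nhds - (γ t).2 * sin_sq_add_cos_sq (φ t)
  rw [angularForm, div_eq_iff (sq_fst_add_sq_snd_ne_zero hγ0)]
  linear_combination v.2 * hx - v.1 * hy - r * hdiff - w * (γ t).1 * hx - w * (γ t).2 * hy

theorem integral_angularForm_eq_sub (hab : a ≤ b) (hs : s.Countable)
    (hγ0 : ∀ t ∈ Set.Ioo a b, γ t ≠ 0)
    (hγ : ∀ t ∈ Set.Ioo a b \ s, HasDerivAt γ (γ' t) t)
    (hφc : ContinuousOn φ (Set.Icc a b))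
    (hφ : ∀ t ∈ Set.Ioo a b \ s, HasDerivAt φ (φ' t) t)
    (hφ' : IntervalIntegrable φ' volume a b)
    (hdir : ∀ t ∈ Set.Ioo a b, (γ t).1 * sin (φ t) = (γ t).2 * cos (φ t)) :
    ∫ t in a..b, angularForm (γ t) (γ' t) = φ b - φ a := by
  have hpt : ∀ t ∈ Set.Ioo a b \ s, angularForm (γ t) (γ' t) = φ' t := fun t ht ↦
    angularForm_eq_of_hasDerivAt (hγ0 t ht.1) (hγ t ht) (hφ t ht)
      (Filter.eventually_of_mem (isOpen_Ioo.mem_nhds ht.1) hdir)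
  have hae : ∀ᵐ t, t ∈ Set.uIoc a b → angularForm (γ t) (γ' t) = φ' t := by
    filter_upwards [hs.ae_notMem volume, volume.ae_ne b] with t hts htb ht
    rw [Set.uIoc_of_le hab] at ht
    exact hpt t ⟨⟨ht.1, ht.2.lt_of_ne htb⟩, hts⟩
  rw [integral_congr_ae hae]
  exact integral_eq_of_hasDerivAt_off_countable_of_le φ φ' hab hs hφc hφ hφ'

theorem geometric_phase_eq_half_angle_variation_general (hab : a ≤ b) (hs : s.Countable)
    (hγ0 : ∀ t ∈ Set.Icc a b, γ t ≠ 0)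
    (hγ : ∀ t ∈ Set.Ioo a b \ s, HasDerivAt γ (γ' t) t)
    (hφc : ContinuousOn φ (Set.Icc a b))
    (hφ : ∀ t ∈ Set.Ioo a b \ s, HasDerivAt φ (φ' t) t)
    (hφ' : IntervalIntegrable φ' volume a b)
    (hlift : ∀ t ∈ Set.Icc a b, IsPolarAngle (γ t) (φ t)) :
    (∫ t in a..b, connForm (γ t) (γ' t)) = (φ b - φ a) / 2 ∧
    (γ a = γ b → ∃ k : ℤ, φ b - φ a = 2 * π * k ∧
      (∫ t in a..b, connForm (γ t) (γ' t)) = π * k) := by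
  have hphase : ∫ t in a..b, connForm (γ t) (γ' t) = (φ b - φ a) / 2 := by
    have hIoo {t : ℝ} (ht : t ∈ Set.Ioo a b) : t ∈ Set.Icc a b := Set.Ioo_subset_Icc_self ht
    simp only [connForm_eq_angularForm_div_two, intervalIntegral.integral_div]
    rw [integral_angularForm_eq_sub hab hs (fun t ht ↦ hγ0 t (hIoo ht)) hγ hφc hφ hφ'
      fun t ht ↦ (hlift t (hIoo ht)).fst_mul_sin_eq_snd_mul_cos]
  refine ⟨hphase, fun hclosed ↦ ?_⟩
  have ha : IsPolarAngle (γ b) (φ a) := hclosed ▸ hlift a (Set.left_mem_Icc.2 hab)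
  have hb : b ∈ Set.Icc a b := Set.right_mem_Icc.2 hab
  obtain ⟨k, hk⟩ := Real.Angle.angle_eq_iff_two_pi_dvd_sub.1
    (IsPolarAngle.coe_angle_eq (hγ0 b hb) (hlift b hb) ha)
  exact ⟨k, hk, by rw [hphase, hk]; ring⟩

end AngleLift

/-- the geometric phase along a C¹ curve `γ` avoiding the origin is
half the total variation of any C¹ angle lift `φ`; for closed curves it equals
`π` times the (integer) winding number. -/
theorem geometric_phase_eq_half_angle_variation
    (γ γ' : ℝ → ℝ × ℝ) (φ φ' : ℝ → ℝ)
    (hγ0 : ∀ t ∈ Set.Icc (0 : ℝ) 1, γ t ≠ 0)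
    (hγder : ∀ t ∈ Set.Icc (0 : ℝ) 1, HasDerivAt γ (γ' t) t)
    (hγ'cont : ContinuousOn γ' (Set.Icc 0 1))
    (hφder : ∀ t ∈ Set.Icc (0 : ℝ) 1, HasDerivAt φ (φ' t) t)
    (hφ'cont : ContinuousOn φ' (Set.Icc 0 1))
    (hlift : ∀ t ∈ Set.Icc (0 : ℝ) 1,
      γ t = Real.sqrt ((γ t).1 ^ 2 + (γ t).2 ^ 2) • (Real.cos (φ t), Real.sin (φ t))) :
    (∫ t in (0 : ℝ)..1, connForm (γ t) (γ' t)) = (φ 1 - φ 0) / 2 ∧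
    (γ 0 = γ 1 → ∃ k : ℤ, φ 1 - φ 0 = 2 * π * k ∧
      (∫ t in (0 : ℝ)..1, connForm (γ t) (γ' t)) = π * k) :=
  geometric_phase_eq_half_angle_variation_general zero_le_one Set.countable_empty hγ0
    (fun t ht ↦ hγder t (Set.Ioo_subset_Icc_self ht.1)) (HasDerivAt.continuousOn hφder)
    (fun t ht ↦ hφder t (Set.Ioo_subset_Icc_self ht.1))
    (hφ'cont.intervalIntegrable_of_Icc zero_le_one) hlift
end

section
/- Let F : ℝ² \ {0} → ℝ³ be given by F(x,y) = ((x² − y²)/r, 2xy/r, √3·r) with r = √(x²+y²), i.e. the composition of the branched double cover π(r·e^{iφ}) = r·e^{i2φ} with the cone parametrization f(x,y) = (x, y, √3·r). Let h(p) = (DF(p))ᵀ·(DF(p)) be the pullback metric. Then for every r > 0 and φ, at p = (r·cos φ, r·sin φ), with ∂r = (cos φ, sin φ) and ∂φ = (−r·sin φ, r·cos φ): ∂rᵀ·h(p)·∂r = 4, ∂φᵀ·h(p)·∂φ = 4r², and ∂rᵀ·h(p)·∂φ = 0; i.e., in polar coordinates h = diag(4, 4r²). -/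
open Real Matrix

/-- The composition `f ∘ π` of the branched double cover
`π(r·e^{iφ}) = r·e^{i2φ}` with the cone parametrization
`f(x,y) = (x, y, √3·r)`, i.e. `F(x,y) = ((x²−y²)/r, 2xy/r, √3·r)`. -/
noncomputable def coverPar : ℝ × ℝ → (Fin 3 → ℝ) :=
  fun p => ![(p.1 ^ 2 - p.2 ^ 2) / Real.sqrt (p.1 ^ 2 + p.2 ^ 2),
             2 * p.1 * p.2 / Real.sqrt (p.1 ^ 2 + p.2 ^ 2),
             Real.sqrt 3 * Real.sqrt (p.1 ^ 2 + p.2 ^ 2)]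

open Filter Topology

/-!
In polar coordinates the composed map is `(t, s) ↦ (t cos 2s, t sin 2s, √3 t)`. On a cone of
slope `c` the radial direction is stretched by `√(1 + c²)`, and on an `n`-fold cover the angular
direction is stretched by `n`. For `c = √3` and `n = 2` both factors are `2`, which is why the
pullback metric is four times the Euclidean one.
-/

theorem fderiv_apply_of_comp_eventuallyEq {𝕜 E F : Type*} [NontriviallyNormedField 𝕜]
    [NormedAddCommGroup E] [NormedSpace 𝕜 E] [NormedAddCommGroup F] [NormedSpace 𝕜 F]
    {f : E → F} {γ : 𝕜 → E} {g : 𝕜 → F} {a : 𝕜} {x v : E} {w : F}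
    (hf : DifferentiableAt 𝕜 f x) (hγ : HasDerivAt γ v a) (hx : x = γ a)
    (hg : HasDerivAt g w a) (hfg : f ∘ γ =ᶠ[𝓝 a] g) : fderiv 𝕜 f x v = w :=
  (hf.hasFDerivAt.comp_hasDerivAt_of_eq a hγ hx).unique (hg.congr_of_eventuallyEq hfg)

/-- The cone of slope `c` about the third axis, parametrized by polar coordinates `(t, s)` on its
`n`-fold branched cover: the point over `(t, s)` has angle `n * s` about the axis. Any real `n`
is allowed. -/
noncomputable def coneCover (c n t s : ℝ) : Fin 3 → ℝ :=
  ![t * cos (n * s), t * sin (n * s), c * t]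

section TangentVectors

variable (c n t s m θ : ℝ)

theorem hasDerivAt_coneCover_radius :
    HasDerivAt (fun t => coneCover c n t s) ![cos (n * s), sin (n * s), c] t := by
  simp only [coneCover, hasDerivAt_pi, Fin.forall_fin_succ]
  exact ⟨hasDerivAt_mul_const _, hasDerivAt_mul_const _, hasDerivAt_const_mul _, nofun⟩

theorem hasDerivAt_coneCover_angle :
    HasDerivAt (coneCover c n t) ![-(n * t * sin (n * s)), n * t * cos (n * s), 0] s := by
  have hs : HasDerivAt (fun s => n * s) n s := hasDerivAt_const_mul n
  simp only [coneCover, hasDerivAt_pi, Fin.forall_fin_succ]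
  exact ⟨(hs.cos.const_mul t).congr_deriv (by simp only [cons_val_zero]; ring),
    (hs.sin.const_mul t).congr_deriv (by simp only [cons_val_succ, cons_val_zero]; ring),
    hasDerivAt_const _ _, nofun⟩

theorem radial_dotProduct_self :
    ![cos θ, sin θ, c] ⬝ᵥ ![cos θ, sin θ, c] = 1 + c ^ 2 := by
  simp only [vec3_dotProduct, cons_val]
  linear_combination cos_sq_add_sin_sq θ

theorem angular_dotProduct_self :
    ![-(m * sin θ), m * cos θ, 0] ⬝ᵥ ![-(m * sin θ), m * cos θ, 0] = m ^ 2 := by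
  simp only [vec3_dotProduct, cons_val]
  linear_combination m ^ 2 * sin_sq_add_cos_sq θ

theorem radial_dotProduct_angular :
    ![cos θ, sin θ, c] ⬝ᵥ ![-(m * sin θ), m * cos θ, 0] = 0 := by
  simp only [vec3_dotProduct, cons_val]
  ring

end TangentVectors

theorem sq_add_sq_polar (t s : ℝ) : (t * cos s) ^ 2 + (t * sin s) ^ 2 = t ^ 2 := by
  linear_combination t ^ 2 * cos_sq_add_sin_sq s

theorem coverPar_polar {t : ℝ} (ht : 0 < t) (s : ℝ) :
    coverPar (t * cos s, t * sin s) = coneCover √3 2 t s := by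
  have hcos : ((t * cos s) ^ 2 - (t * sin s) ^ 2) / t = t * cos (2 * s) := by
    rw [cos_two_mul']
    field_simp
  have hsin : 2 * (t * cos s) * (t * sin s) / t = t * sin (2 * s) := by
    rw [sin_two_mul]
    field_simp
  simp only [coverPar, coneCover, sq_add_sq_polar, sqrt_sq ht.le, hcos, hsin]

theorem differentiableAt_coverPar {p : ℝ × ℝ} (hp : p.1 ^ 2 + p.2 ^ 2 ≠ 0) :
    DifferentiableAt ℝ coverPar p := by
  have hsqrt : √(p.1 ^ 2 + p.2 ^ 2) ≠ 0 := (sqrt_ne_zero (by positivity)).2 hp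
  simp only [differentiableAt_pi, Fin.forall_fin_succ, coverPar, cons_val_zero, cons_val_succ]
  refine ⟨?_, ?_, ?_, nofun⟩ <;> fun_prop (disch := assumption)

theorem differentiableAt_coverPar_polar {r : ℝ} (hr : r ≠ 0) (φ : ℝ) :
    DifferentiableAt ℝ coverPar (r * cos φ, r * sin φ) :=
  differentiableAt_coverPar ((sq_add_sq_polar r φ).trans_ne (pow_ne_zero 2 hr))

theorem fderiv_coverPar_radial {r : ℝ} (hr : 0 < r) (φ : ℝ) :
    fderiv ℝ coverPar (r * cos φ, r * sin φ) (cos φ, sin φ) =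
      ![cos (2 * φ), sin (2 * φ), √3] := by
  have hray : HasDerivAt (fun t => (t * cos φ, t * sin φ)) (cos φ, sin φ) r :=
    (hasDerivAt_mul_const _).prodMk (hasDerivAt_mul_const _)
  exact fderiv_apply_of_comp_eventuallyEq (differentiableAt_coverPar_polar hr.ne' φ) hray rfl
    (hasDerivAt_coneCover_radius _ _ _ _)
    ((lt_mem_nhds hr).mono fun _ ht => coverPar_polar ht φ)

theorem fderiv_coverPar_angular {r : ℝ} (hr : 0 < r) (φ : ℝ) :
    fderiv ℝ coverPar (r * cos φ, r * sin φ) (-(r * sin φ), r * cos φ) =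
      ![-(2 * r * sin (2 * φ)), 2 * r * cos (2 * φ), 0] := by
  have hcircle : HasDerivAt (fun s => (r * cos s, r * sin s)) (-(r * sin φ), r * cos φ) φ :=
    (((hasDerivAt_cos φ).const_mul r).congr_deriv (mul_neg _ _)).prodMk
      ((hasDerivAt_sin φ).const_mul r)
  exact fderiv_apply_of_comp_eventuallyEq (differentiableAt_coverPar_polar hr.ne' φ) hcircle rfl
    (hasDerivAt_coneCover_angle _ _ _ _) (.of_forall fun s => coverPar_polar hr s)

/-- the pullback metric `h = (DF)ᵀ(DF)` of the branched double
cover composed with the cone parametrization is `diag(4, 4r²)` in polar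
coordinates: `∂rᵀh∂r = 4`, `∂φᵀh∂φ = 4r²`, `∂rᵀh∂φ = 0`. -/
theorem pullback_metric_on_cover_polar (r φ : ℝ) (hr : 0 < r) :
    let p : ℝ × ℝ := (r * Real.cos φ, r * Real.sin φ)
    let dr : ℝ × ℝ := (Real.cos φ, Real.sin φ)
    let dφ : ℝ × ℝ := (-(r * Real.sin φ), r * Real.cos φ)
    (fderiv ℝ coverPar p dr) ⬝ᵥ (fderiv ℝ coverPar p dr) = 4 ∧
    (fderiv ℝ coverPar p dφ) ⬝ᵥ (fderiv ℝ coverPar p dφ) = 4 * r ^ 2 ∧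
    (fderiv ℝ coverPar p dr) ⬝ᵥ (fderiv ℝ coverPar p dφ) = 0 := by
  intro p dr dφ
  have hslope : 1 + √3 ^ 2 = 4 := by norm_num
  have hdouble : (2 * r) ^ 2 = 4 * r ^ 2 := by ring
  rw [fderiv_coverPar_radial hr, fderiv_coverPar_angular hr]
  exact ⟨(radial_dotProduct_self _ _).trans hslope,
    (angular_dotProduct_self _ _).trans hdouble, radial_dotProduct_angular _ _ _⟩
end

section
/- Let U ⊆ ℝ² be open and let E₁, E₂, ν : U → ℝ³ be C¹ maps such that at every point of U the triple (E₁, E₂, ν) is orthonormal in ℝ³ (⟨E_a, E_b⟩ = δ_ab for a,b ∈ {1,2,3} with E₃ = ν). Then at every point of U: ⟨∂₁E₁, ∂₂E₂⟩ − ⟨∂₂E₁, ∂₁E₂⟩ = ⟨∂₁E₁, ν⟩·⟨∂₂E₂, ν⟩ − ⟨∂₂E₁, ν⟩·⟨∂₁E₂, ν⟩. -/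
open Real Matrix

/-!
Since `E₁ ⬝ᵥ E₁` and `E₂ ⬝ᵥ E₂` are constant, every derivative of `E₁` is orthogonal to `E₁` and
every derivative of `E₂` is orthogonal to `E₂`. In the expansion of `∂ᵢE₁ ⬝ᵥ ∂ⱼE₂` along the
orthonormal frame `(E₁, E₂, ν)` the two tangential terms therefore each contain a vanishing factor,
and `∂ᵢE₁ ⬝ᵥ ∂ⱼE₂ = (∂ᵢE₁ ⬝ᵥ ν) * (∂ⱼE₂ ⬝ᵥ ν)` holds for each pair `i, j`, before antisymmetrizing.
-/

section Parseval

variable {n R : Type*} [Fintype n] [DecidableEq n] [CommRing R] {e : n → n → R}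

theorem sum_dotProduct_mul_dotProduct_of_mul_transpose_eq_one (he : of e * (of e)ᵀ = 1)
    (x y : n → R) :
    ∑ k, (x ⬝ᵥ e k) * (y ⬝ᵥ e k) = x ⬝ᵥ y :=
  calc ∑ k, (x ⬝ᵥ e k) * (y ⬝ᵥ e k)
      = (x ᵥ* (of e)ᵀ) ⬝ᵥ (of e *ᵥ y) := by simp only [dotProduct_comm y]; rfl
    _ = x ⬝ᵥ (((of e)ᵀ * of e) *ᵥ y) := by rw [← dotProduct_mulVec, mulVec_mulVec]
    _ = x ⬝ᵥ y := by rw [mul_eq_one_comm.mp he, one_mulVec]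

theorem dotProduct_eq_sum_compl_pair (he : of e * (of e)ᵀ = 1) {i j : n} {x y : n → R}
    (hx : x ⬝ᵥ e i = 0) (hy : y ⬝ᵥ e j = 0) :
    x ⬝ᵥ y = ∑ k ∈ {i, j}ᶜ, (x ⬝ᵥ e k) * (y ⬝ᵥ e k) := by
  have tangential_eq_zero : ∑ k ∈ {i, j}, (x ⬝ᵥ e k) * (y ⬝ᵥ e k) = 0 := by
    refine Finset.sum_eq_zero fun k hk ↦ ?_
    obtain rfl | rfl : k = i ∨ k = j := by simpa using hk
    · rw [hx, zero_mul]
    · rw [hy, mul_zero]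
  rw [← sum_dotProduct_mul_dotProduct_of_mul_transpose_eq_one he, ← Finset.sum_add_sum_compl {i, j},
    tangential_eq_zero, zero_add]

end Parseval

theorem of_vec3_mul_transpose_eq_one {R : Type*} [CommSemiring R] {a b c : Fin 3 → R}
    (haa : a ⬝ᵥ a = 1) (hbb : b ⬝ᵥ b = 1) (hcc : c ⬝ᵥ c = 1)
    (hab : a ⬝ᵥ b = 0) (hac : a ⬝ᵥ c = 0) (hbc : b ⬝ᵥ c = 0) :
    of ![a, b, c] * (of ![a, b, c])ᵀ = 1 := by
  ext i j
  change ![a, b, c] i ⬝ᵥ ![a, b, c] j = _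
  fin_cases i <;> fin_cases j <;>
    simp [haa, hbb, hcc, hab, hac, hbc, dotProduct_comm b a, dotProduct_comm c a,
      dotProduct_comm c b]

section Derivative

variable {𝕜 V n : Type*} [NontriviallyNormedField 𝕜] [NormedAddCommGroup V] [NormedSpace 𝕜 V]
  [Fintype n] {p : V}

theorem hasFDerivAt_dotProduct {f g : V → n → 𝕜} {f' g' : V →L[𝕜] n → 𝕜}
    (hf : HasFDerivAt f f' p) (hg : HasFDerivAt g g' p) :
    HasFDerivAt (fun q ↦ f q ⬝ᵥ g q)
      (∑ i, (f p i • (ContinuousLinearMap.proj i).comp g' +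
        g p i • (ContinuousLinearMap.proj i).comp f')) p :=
  HasFDerivAt.fun_sum fun i _ ↦ (hasFDerivAt_pi'.mp hf i).mul (hasFDerivAt_pi'.mp hg i)

theorem dotProduct_eq_zero_of_dotProduct_self_eventually_const [NeZero (2 : 𝕜)]
    {f : V → n → 𝕜} {f' : V →L[𝕜] n → 𝕜} {c : 𝕜} (hf : HasFDerivAt f f' p)
    (hc : ∀ᶠ q in nhds p, f q ⬝ᵥ f q = c) (v : V) : f' v ⬝ᵥ f p = 0 := by
  have derivative_eq_zero := (hasFDerivAt_dotProduct hf hf).unique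
    ((hasFDerivAt_const c p).congr_of_eventuallyEq hc)
  have two_mul_eq_zero : 2 * (f p ⬝ᵥ f' v) = 0 := by
    simpa [dotProduct, Finset.mul_sum, two_mul, Finset.sum_add_distrib] using
      congr($derivative_eq_zero v)
  rw [dotProduct_comm]
  exact (mul_eq_zero.mp two_mul_eq_zero).resolve_left two_ne_zero

section Frame

variable [DecidableEq n] [NeZero (2 : 𝕜)] {E₁ E₂ : V → n → 𝕜} {E₁' E₂' : V →L[𝕜] n → 𝕜}
  {e : n → n → 𝕜} {i j : n}

theorem dotProduct_derivative_eq_sum_compl_pair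
    (hE₁ : HasFDerivAt E₁ E₁' p) (hE₂ : HasFDerivAt E₂ E₂' p)
    (hunit₁ : ∀ᶠ q in nhds p, E₁ q ⬝ᵥ E₁ q = 1) (hunit₂ : ∀ᶠ q in nhds p, E₂ q ⬝ᵥ E₂ q = 1)
    (he : of e * (of e)ᵀ = 1) (hi : e i = E₁ p) (hj : e j = E₂ p) (u v : V) :
    E₁' u ⬝ᵥ E₂' v = ∑ k ∈ {i, j}ᶜ, (E₁' u ⬝ᵥ e k) * (E₂' v ⬝ᵥ e k) :=
  dotProduct_eq_sum_compl_pair he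
    (hi ▸ dotProduct_eq_zero_of_dotProduct_self_eventually_const hE₁ hunit₁ u)
    (hj ▸ dotProduct_eq_zero_of_dotProduct_self_eventually_const hE₂ hunit₂ v)

theorem berry_curvature_second_fundamental_form_general
    (hE₁ : HasFDerivAt E₁ E₁' p) (hE₂ : HasFDerivAt E₂ E₂' p)
    (hunit₁ : ∀ᶠ q in nhds p, E₁ q ⬝ᵥ E₁ q = 1) (hunit₂ : ∀ᶠ q in nhds p, E₂ q ⬝ᵥ E₂ q = 1)
    (he : of e * (of e)ᵀ = 1) (hi : e i = E₁ p) (hj : e j = E₂ p) (u v : V) :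
    E₁' u ⬝ᵥ E₂' v - E₁' v ⬝ᵥ E₂' u =
      ∑ k ∈ {i, j}ᶜ, ((E₁' u ⬝ᵥ e k) * (E₂' v ⬝ᵥ e k) - (E₁' v ⬝ᵥ e k) * (E₂' u ⬝ᵥ e k)) := by
  have expand := dotProduct_derivative_eq_sum_compl_pair hE₁ hE₂ hunit₁ hunit₂ he hi hj
  rw [expand u v, expand v u, Finset.sum_sub_distrib]

end Frame

end Derivative

/-- for a C¹ orthonormal frame `(E₁, E₂, ν)` in `ℝ³` over an open
domain `U ⊆ ℝ²`, the Berry curvature equals the determinant-like combination of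
second-fundamental-form entries:
`⟨∂₁E₁, ∂₂E₂⟩ − ⟨∂₂E₁, ∂₁E₂⟩ = ⟨∂₁E₁, ν⟩⟨∂₂E₂, ν⟩ − ⟨∂₂E₁, ν⟩⟨∂₁E₂, ν⟩`. -/
theorem berry_curvature_second_fundamental_form
    (U : Set (ℝ × ℝ)) (hU : IsOpen U)
    (E₁ E₂ ν : ℝ × ℝ → (Fin 3 → ℝ))
    (hE₁ : ContDiffOn ℝ 1 E₁ U) (hE₂ : ContDiffOn ℝ 1 E₂ U)
    (hν : ContDiffOn ℝ 1 ν U)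
    (horth : ∀ p ∈ U,
      E₁ p ⬝ᵥ E₁ p = 1 ∧ E₂ p ⬝ᵥ E₂ p = 1 ∧ ν p ⬝ᵥ ν p = 1 ∧
      E₁ p ⬝ᵥ E₂ p = 0 ∧ E₁ p ⬝ᵥ ν p = 0 ∧ E₂ p ⬝ᵥ ν p = 0)
    (p : ℝ × ℝ) (hp : p ∈ U) :
    (fderiv ℝ E₁ p (1, 0)) ⬝ᵥ (fderiv ℝ E₂ p (0, 1)) -
      (fderiv ℝ E₁ p (0, 1)) ⬝ᵥ (fderiv ℝ E₂ p (1, 0)) =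
    ((fderiv ℝ E₁ p (1, 0)) ⬝ᵥ ν p) * ((fderiv ℝ E₂ p (0, 1)) ⬝ᵥ ν p) -
      ((fderiv ℝ E₁ p (0, 1)) ⬝ᵥ ν p) * ((fderiv ℝ E₂ p (1, 0)) ⬝ᵥ ν p) := by
  have hasFDerivAt_of_contDiffOn {E : ℝ × ℝ → Fin 3 → ℝ} (hE : ContDiffOn ℝ 1 E U) :
      HasFDerivAt E (fderiv ℝ E p) p :=
    ((hE.contDiffAt (hU.mem_nhds hp)).differentiableAt one_ne_zero).hasFDerivAt
  have horth_eventually := Filter.eventually_of_mem (hU.mem_nhds hp) horth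
  obtain ⟨h₁₁, h₂₂, h₃₃, h₁₂, h₁₃, h₂₃⟩ := horth p hp
  have normal_index : ({0, 1}ᶜ : Finset (Fin 3)) = {2} := by decide
  simpa [normal_index] using berry_curvature_second_fundamental_form_general
    (hasFDerivAt_of_contDiffOn hE₁) (hasFDerivAt_of_contDiffOn hE₂)
    (horth_eventually.mono fun _ h ↦ h.1) (horth_eventually.mono fun _ h ↦ h.2.1)
    (of_vec3_mul_transpose_eq_one h₁₁ h₂₂ h₃₃ h₁₂ h₁₃ h₂₃)
    (i := 0) (j := 1) rfl rfl (1, 0) (0, 1)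
end
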